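/- arXiv:1502.06253 — 2 statements merged into one kernel-verified Lean document; each statement's English description precedes it below -/
import Mathlib

section
/- Let C₁ and C₂ be bounded cochain complexes of finite-dimensional real vector spaces indexed by the natural numbers such that dim C₁^i = dim C₂^i for every degree i. Let f : C₁ → C₂ be a chain map that is a homotopy equivalence. Then there exists a chain isomorphism f' : C₁ → C₂ that is chain homotopic to f. -/
/-- A cochain complex of real vector spaces indexed by the natural numbers. -/
structure CochainComplexNat where
  X : ℕ → Type
  [addCommGroup : ∀ i, AddCommGroup (X i)]
  [module : ∀ i, Module ℝ (X i)]
  d : ∀ i, X i →ₗ[ℝ] X (i + 1)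
  d_comp_d : ∀ i, (d (i + 1)).comp (d i) = 0

attribute [instance] CochainComplexNat.addCommGroup CochainComplexNat.module

/-- A chain map between ℕ-indexed cochain complexes: a family of linear maps
commuting with the differentials. -/
structure ChainMap (C₁ C₂ : CochainComplexNat) where
  f : ∀ i, C₁.X i →ₗ[ℝ] C₂.X i
  comm : ∀ i, (C₂.d i).comp (f i) = (f (i + 1)).comp (C₁.d i)

/-- The identity chain map. -/
def ChainMap.id (C : CochainComplexNat) : ChainMap C C where
  f _ := LinearMap.id
  comm _ := by simp

/-- Composition of chain maps. -/
def ChainMap.comp {C₁ C₂ C₃ : CochainComplexNat} (G : ChainMap C₂ C₃) (F : ChainMap C₁ C₂) :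
    ChainMap C₁ C₃ where
  f i := (G.f i).comp (F.f i)
  comm i := by
    ext v
    have h₁ := LinearMap.congr_fun (F.comm i) v
    have h₂ := LinearMap.congr_fun (G.comm i) (F.f i v)
    simp only [LinearMap.comp_apply] at h₁ h₂ ⊢
    rw [h₂, h₁]

/-- `Homotopic F G` : there exists a chain homotopy `Φ` from `F` to `G`, i.e. a family of
linear maps one degree down (with `Φ^0 = 0`, implemented by letting `Φ i : C₁^{i+1} → C₂^i`
play the role of `Φ^{i+1}`) with `G - F = d ∘ Φ + Φ ∘ d` in every degree. -/
def Homotopic {C₁ C₂ : CochainComplexNat} (F G : ChainMap C₁ C₂) : Prop :=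
  ∃ Φ : ∀ i, C₁.X (i + 1) →ₗ[ℝ] C₂.X i,
    (G.f 0 - F.f 0 = (Φ 0).comp (C₁.d 0)) ∧
    ∀ i, G.f (i + 1) - F.f (i + 1) = (C₂.d i).comp (Φ i) + (Φ (i + 1)).comp (C₁.d (i + 1))

/-- A chain map is a homotopy equivalence if it has a chain-homotopy inverse. -/
def IsHomotopyEquiv {C₁ C₂ : CochainComplexNat} (F : ChainMap C₁ C₂) : Prop :=
  ∃ G : ChainMap C₂ C₁,
    Homotopic (G.comp F) (ChainMap.id C₁) ∧ Homotopic (F.comp G) (ChainMap.id C₂)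

/-! Replacing `F` by `F + dΦ + Φd` does not change the map induced on cohomology, but over a field
`Φ` can be chosen so that the new chain map restricts to any prescribed linear maps between the
spaces of coboundaries. A chain map that is injective on coboundaries and on cohomology is injective
in every degree. Hence it is enough that the coboundaries of `C₁` and `C₂` have equal dimensions,
and this follows by induction on the degree from `Cⁱ ≅ Bⁱ ⊕ Hⁱ ⊕ Bⁱ⁺¹`, because the homotopy
equivalence identifies the cohomologies. -/

theorem exists_linearMap_lifting_on_submodule {K U V W : Type*} [DivisionRing K]
    [AddCommGroup U] [Module K U] [AddCommGroup V] [Module K V] [AddCommGroup W] [Module K W]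
    (d : U →ₗ[K] W) {p : Submodule K V} (g : p →ₗ[K] W) (hg : ∀ b, g b ∈ LinearMap.range d) :
    ∃ Φ : V →ₗ[K] U, ∀ b : p, d (Φ b) = g b := by
  obtain ⟨lift, hlift⟩ := Module.projective_lifting_property d.rangeRestrict (g.codRestrict _ hg)
    d.surjective_rangeRestrict
  obtain ⟨Φ, hΦ⟩ := lift.exists_extend
  refine ⟨Φ, fun b => ?_⟩
  calc d (Φ b) = d (lift b) := congrArg d (LinearMap.congr_fun hΦ b)
    _ = g b := congrArg Subtype.val (LinearMap.congr_fun hlift b)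

namespace CochainComplexNat

variable (C : CochainComplexNat)

theorem d_d_apply (i : ℕ) (x : C.X i) : C.d (i + 1) (C.d i x) = 0 :=
  LinearMap.congr_fun (C.d_comp_d i) x

/-- The cocycles `Zⁱ = ker dⁱ`. -/
abbrev cocycles (i : ℕ) : Submodule ℝ (C.X i) :=
  LinearMap.ker (C.d i)

/-- The coboundaries `Bⁱ⁺¹ = im dⁱ`, with `B⁰ = 0`. -/
def coboundaries : ∀ i, Submodule ℝ (C.X i)
  | 0 => ⊥
  | i + 1 => LinearMap.range (C.d i)

theorem d_mem_coboundaries (i : ℕ) (x : C.X i) : C.d i x ∈ C.coboundaries (i + 1) :=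
  ⟨x, rfl⟩

theorem coboundaries_le_cocycles : ∀ i, C.coboundaries i ≤ C.cocycles i
  | 0 => bot_le
  | i + 1 => LinearMap.range_le_ker_iff.2 (C.d_comp_d i)

/-- The cohomology `Hⁱ = Zⁱ / Bⁱ`, where `Bⁱ` is regarded as a subspace of `Zⁱ`. -/
abbrev cohomology (i : ℕ) : Type :=
  C.cocycles i ⧸ (C.coboundaries i).submoduleOf (C.cocycles i)

/-- The projection `Zⁱ → Hⁱ` sending a cocycle to its cohomology class. -/
def cohomologyClass (i : ℕ) : C.cocycles i →ₗ[ℝ] C.cohomology i :=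
  ((C.coboundaries i).submoduleOf (C.cocycles i)).mkQ

theorem cohomologyClass_eq_zero_iff {i : ℕ} {z : C.cocycles i} :
    C.cohomologyClass i z = 0 ↔ (z : C.X i) ∈ C.coboundaries i :=
  Submodule.Quotient.mk_eq_zero _

theorem finrank_eq_coboundaries_add_cohomology_add_coboundaries (i : ℕ)
    [FiniteDimensional ℝ (C.X i)] :
    Module.finrank ℝ (C.X i) = Module.finrank ℝ (C.coboundaries i) +
      Module.finrank ℝ (C.cohomology i) + Module.finrank ℝ (C.coboundaries (i + 1)) := by
  have hB : Module.finrank ℝ ((C.coboundaries i).submoduleOf (C.cocycles i)) =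
      Module.finrank ℝ (C.coboundaries i) :=
    (Submodule.submoduleOfEquivOfLe (C.coboundaries_le_cocycles i)).finrank_eq
  calc Module.finrank ℝ (C.X i)
      = Module.finrank ℝ (C.coboundaries (i + 1)) + Module.finrank ℝ (C.cocycles i) :=
        (C.d i).finrank_range_add_finrank_ker.symm
    _ = _ := by
        rw [← Submodule.finrank_quotient_add_finrank
          ((C.coboundaries i).submoduleOf (C.cocycles i)), hB]
        ring

end CochainComplexNat

section

variable {C₁ C₂ C₃ : CochainComplexNat}

theorem finrank_coboundaries_eq_of_finrank_cohomology_eq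
    [∀ i, FiniteDimensional ℝ (C₁.X i)] [∀ i, FiniteDimensional ℝ (C₂.X i)]
    (hX : ∀ i, Module.finrank ℝ (C₁.X i) = Module.finrank ℝ (C₂.X i))
    (hH : ∀ i, Module.finrank ℝ (C₁.cohomology i) = Module.finrank ℝ (C₂.cohomology i)) (i : ℕ) :
    Module.finrank ℝ (C₁.coboundaries i) = Module.finrank ℝ (C₂.coboundaries i) := by
  induction i with
  | zero => exact (finrank_bot ℝ _).trans (finrank_bot ℝ _).symm
  | succ i ih =>
    have hC₁ := C₁.finrank_eq_coboundaries_add_cohomology_add_coboundaries i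
    have hC₂ := C₂.finrank_eq_coboundaries_add_cohomology_add_coboundaries i
    have hXi := hX i
    have hHi := hH i
    lia

namespace ChainMap

theorem d_f_apply (F : ChainMap C₁ C₂) (i : ℕ) (x : C₁.X i) :
    C₂.d i (F.f i x) = F.f (i + 1) (C₁.d i x) :=
  LinearMap.congr_fun (F.comm i) x

theorem f_mem_cocycles (F : ChainMap C₁ C₂) (i : ℕ) :
    ∀ z ∈ C₁.cocycles i, F.f i z ∈ C₂.cocycles i := fun z hz => by
  rw [LinearMap.mem_ker, d_f_apply, LinearMap.mem_ker.1 hz, map_zero]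

theorem f_mem_coboundaries (F : ChainMap C₁ C₂) :
    ∀ i, ∀ b ∈ C₁.coboundaries i, F.f i b ∈ C₂.coboundaries i
  | 0, _, hb => by
    rw [(Submodule.mem_bot ℝ).1 hb, map_zero]
    exact zero_mem _
  | i + 1, _, ⟨x, hx⟩ => ⟨F.f i x, by rw [d_f_apply, hx]⟩

/-- The linear map `Zⁱ(C₁) → Zⁱ(C₂)` obtained by restricting a chain map. -/
def cocyclesMap (F : ChainMap C₁ C₂) (i : ℕ) : C₁.cocycles i →ₗ[ℝ] C₂.cocycles i :=
  (F.f i).restrict (F.f_mem_cocycles i)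

/-- The linear map `Hⁱ(C₁) → Hⁱ(C₂)` induced by a chain map. -/
def cohomologyMap (F : ChainMap C₁ C₂) (i : ℕ) : C₁.cohomology i →ₗ[ℝ] C₂.cohomology i :=
  Submodule.mapQ _ _ (F.cocyclesMap i) fun z => F.f_mem_coboundaries i z

theorem cohomologyMap_cohomologyClass (F : ChainMap C₁ C₂) (i : ℕ) (z : C₁.cocycles i) :
    F.cohomologyMap i (C₁.cohomologyClass i z) = C₂.cohomologyClass i (F.cocyclesMap i z) :=
  rfl

theorem cohomologyMap_id (C : CochainComplexNat) (i : ℕ) :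
    (ChainMap.id C).cohomologyMap i = LinearMap.id :=
  Submodule.linearMap_qext _ rfl

theorem cohomologyMap_comp (G : ChainMap C₂ C₃) (F : ChainMap C₁ C₂) (i : ℕ) :
    (G.comp F).cohomologyMap i = G.cohomologyMap i ∘ₗ F.cohomologyMap i :=
  Submodule.linearMap_qext _ rfl

theorem mem_coboundaries_of_injective_cohomologyMap {F : ChainMap C₁ C₂} {i : ℕ}
    (hF : Function.Injective (F.cohomologyMap i)) {z : C₁.X i} (hz : z ∈ C₁.cocycles i)
    (hFz : F.f i z ∈ C₂.coboundaries i) : z ∈ C₁.coboundaries i := by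
  have hclass : F.cohomologyMap i (C₁.cohomologyClass i ⟨z, hz⟩) = 0 := by
    rw [cohomologyMap_cohomologyClass]
    exact C₂.cohomologyClass_eq_zero_iff.2 hFz
  exact C₁.cohomologyClass_eq_zero_iff.1 ((map_eq_zero_iff _ hF).1 hclass)

theorem injective_of_injOn_coboundaries_of_injective_cohomologyMap {F : ChainMap C₁ C₂}
    (hB : ∀ i, Set.InjOn (F.f i) (C₁.coboundaries i))
    (hH : ∀ i, Function.Injective (F.cohomologyMap i)) (i : ℕ) :
    Function.Injective (F.f i) := by
  have eq_zero_of_coboundary : ∀ j, ∀ b ∈ C₁.coboundaries j, F.f j b = 0 → b = 0 :=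
    fun j b hb hFb => hB j hb (zero_mem _) (hFb.trans (map_zero _).symm)
  refine (injective_iff_map_eq_zero _).2 fun x hx => ?_
  have hdx : x ∈ C₁.cocycles i :=
    eq_zero_of_coboundary (i + 1) _ (C₁.d_mem_coboundaries i x) (by rw [← d_f_apply, hx, map_zero])
  have hxB : x ∈ C₁.coboundaries i :=
    mem_coboundaries_of_injective_cohomologyMap (hH i) hdx (hx ▸ zero_mem _)
  exact eq_zero_of_coboundary i x hxB hx

/-- The chain map `F + dΦ + Φd`. As in `Homotopic`, `Φ i` is the component in degree `i + 1`. -/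
def addHomotopy (F : ChainMap C₁ C₂) (Φ : ∀ i, C₁.X (i + 1) →ₗ[ℝ] C₂.X i) : ChainMap C₁ C₂ where
  f
    | 0 => F.f 0 + Φ 0 ∘ₗ C₁.d 0
    | i + 1 => F.f (i + 1) + (C₂.d i ∘ₗ Φ i + Φ (i + 1) ∘ₗ C₁.d (i + 1))
  comm
    | 0 => by ext x; simp [d_f_apply, C₁.d_d_apply]
    | i + 1 => by ext x; simp [d_f_apply, C₁.d_d_apply, C₂.d_d_apply]

theorem homotopic_addHomotopy (F : ChainMap C₁ C₂) (Φ : ∀ i, C₁.X (i + 1) →ₗ[ℝ] C₂.X i) :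
    Homotopic F (F.addHomotopy Φ) :=
  ⟨Φ, add_sub_cancel_left _ _, fun _ => add_sub_cancel_left _ _⟩

theorem addHomotopy_f_d (F : ChainMap C₁ C₂) (Φ : ∀ i, C₁.X (i + 1) →ₗ[ℝ] C₂.X i) (i : ℕ)
    (x : C₁.X i) : (F.addHomotopy Φ).f (i + 1) (C₁.d i x) =
      F.f (i + 1) (C₁.d i x) + C₂.d i (Φ i (C₁.d i x)) := by
  simp [addHomotopy, C₁.d_d_apply]

theorem exists_homotopic_eq_on_coboundaries (F : ChainMap C₁ C₂)
    (φ : ∀ i, C₁.coboundaries i →ₗ[ℝ] C₂.coboundaries i) :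
    ∃ F' : ChainMap C₁ C₂, Homotopic F F' ∧ ∀ i (b : C₁.coboundaries i), F'.f i b = φ i b := by
  have exists_correction : ∀ i, ∃ Φ : C₁.X (i + 1) →ₗ[ℝ] C₂.X i,
      ∀ b : C₁.coboundaries (i + 1), C₂.d i (Φ b) = φ (i + 1) b - F.f (i + 1) b := fun i =>
    exists_linearMap_lifting_on_submodule (C₂.d i)
      ((C₂.coboundaries (i + 1)).subtype ∘ₗ φ (i + 1) -
        F.f (i + 1) ∘ₗ (C₁.coboundaries (i + 1)).subtype)
      fun b => sub_mem (φ (i + 1) b).2 (F.f_mem_coboundaries (i + 1) b b.2)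
  choose Φ hΦ using exists_correction
  refine ⟨F.addHomotopy Φ, F.homotopic_addHomotopy Φ, fun i b => ?_⟩
  cases i with
  | zero =>
    have hb : b = 0 := Subtype.ext ((Submodule.mem_bot ℝ).1 b.2)
    simp only [hb, map_zero, ZeroMemClass.coe_zero]
  | succ i =>
    obtain ⟨_, x, rfl⟩ := b
    rw [addHomotopy_f_d, hΦ i ⟨_, C₁.d_mem_coboundaries i x⟩]
    exact add_sub_cancel _ _

end ChainMap

namespace Homotopic

theorem sub_mem_coboundaries {F G : ChainMap C₁ C₂} (h : Homotopic F G) {i : ℕ} {z : C₁.X i}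
    (hz : z ∈ C₁.cocycles i) : G.f i z - F.f i z ∈ C₂.coboundaries i := by
  obtain ⟨Φ, hzero, hsucc⟩ := h
  rw [LinearMap.mem_ker] at hz
  cases i with
  | zero =>
    have hdiff : G.f 0 z - F.f 0 z = Φ 0 (C₁.d 0 z) := LinearMap.congr_fun hzero z
    rw [hdiff, hz, map_zero]
    exact zero_mem _
  | succ i =>
    have hdiff : G.f (i + 1) z - F.f (i + 1) z =
        C₂.d i (Φ i z) + Φ (i + 1) (C₁.d (i + 1) z) := LinearMap.congr_fun (hsucc i) z
    rw [hdiff, hz, map_zero, add_zero]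
    exact C₂.d_mem_coboundaries i _

theorem cohomologyMap_eq {F G : ChainMap C₁ C₂} (h : Homotopic F G) (i : ℕ) :
    F.cohomologyMap i = G.cohomologyMap i :=
  Submodule.linearMap_qext _ <| LinearMap.ext fun z => calc
    F.cohomologyMap i (C₁.cohomologyClass i z)
      = C₂.cohomologyClass i (F.cocyclesMap i z) := F.cohomologyMap_cohomologyClass i z
    _ = C₂.cohomologyClass i (G.cocyclesMap i z) := by
        rw [eq_comm, ← sub_eq_zero, ← map_sub, C₂.cohomologyClass_eq_zero_iff]
        exact h.sub_mem_coboundaries z.2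
    _ = G.cohomologyMap i (C₁.cohomologyClass i z) := (G.cohomologyMap_cohomologyClass i z).symm

theorem leftInverse_cohomologyMap {F : ChainMap C₁ C₂} {G : ChainMap C₂ C₁}
    (h : Homotopic (G.comp F) (ChainMap.id C₁)) (i : ℕ) :
    Function.LeftInverse (G.cohomologyMap i) (F.cohomologyMap i) :=
  LinearMap.congr_fun <| calc
    G.cohomologyMap i ∘ₗ F.cohomologyMap i = (G.comp F).cohomologyMap i :=
      (ChainMap.cohomologyMap_comp G F i).symm
    _ = (ChainMap.id C₁).cohomologyMap i := h.cohomologyMap_eq i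
    _ = LinearMap.id := ChainMap.cohomologyMap_id C₁ i

end Homotopic

theorem IsHomotopyEquiv.bijective_cohomologyMap {F : ChainMap C₁ C₂} (hF : IsHomotopyEquiv F)
    (i : ℕ) : Function.Bijective (F.cohomologyMap i) := by
  obtain ⟨G, hGF, hFG⟩ := hF
  exact ⟨(hGF.leftInverse_cohomologyMap i).injective, (hFG.leftInverse_cohomologyMap i).surjective⟩

end

theorem exists_chain_iso_homotopic_of_homotopy_equiv_general
    (C₁ C₂ : CochainComplexNat)
    [∀ i, FiniteDimensional ℝ (C₁.X i)] [∀ i, FiniteDimensional ℝ (C₂.X i)]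
    (hdim : ∀ i, Module.finrank ℝ (C₁.X i) = Module.finrank ℝ (C₂.X i))
    (F : ChainMap C₁ C₂) (hF : IsHomotopyEquiv F) :
    ∃ F' : ChainMap C₁ C₂, (∀ i, Function.Bijective (F'.f i)) ∧ Homotopic F F' := by
  have hH : ∀ i, Module.finrank ℝ (C₁.cohomology i) = Module.finrank ℝ (C₂.cohomology i) :=
    fun i => (LinearEquiv.ofBijective _ (hF.bijective_cohomologyMap i)).finrank_eq
  let φ : ∀ i, C₁.coboundaries i ≃ₗ[ℝ] C₂.coboundaries i := fun i =>
    LinearEquiv.ofFinrankEq _ _ (finrank_coboundaries_eq_of_finrank_cohomology_eq hdim hH i)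
  obtain ⟨F', hFF', hφ⟩ := F.exists_homotopic_eq_on_coboundaries fun i => (φ i).toLinearMap
  have injOn_coboundaries : ∀ i, Set.InjOn (F'.f i) (C₁.coboundaries i) := fun i =>
    Set.injOn_iff_injective.2 fun b b' hbb' =>
      (φ i).injective <| Subtype.ext <| (hφ i b).symm.trans (hbb'.trans (hφ i b'))
  have injective_cohomologyMap : ∀ i, Function.Injective (F'.cohomologyMap i) := fun i =>
    hFF'.cohomologyMap_eq i ▸ (hF.bijective_cohomologyMap i).injective
  have hinj : ∀ i, Function.Injective (F'.f i) :=
    ChainMap.injective_of_injOn_coboundaries_of_injective_cohomologyMap injOn_coboundaries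
      injective_cohomologyMap
  exact ⟨F', fun i => ⟨hinj i,
    (LinearMap.injective_iff_surjective_of_finrank_eq_finrank (hdim i)).1 (hinj i)⟩, hFF'⟩

/-- If `C₁` and `C₂` are bounded cochain complexes of finite-dimensional real
vector spaces with the same dimension in every degree, then any chain map `F : C₁ → C₂`
which is a homotopy equivalence is chain homotopic to a chain isomorphism. -/
theorem exists_chain_iso_homotopic_of_homotopy_equiv
    (C₁ C₂ : CochainComplexNat)
    [∀ i, FiniteDimensional ℝ (C₁.X i)] [∀ i, FiniteDimensional ℝ (C₂.X i)]
    (N₁ : ℕ) (hbd₁ : ∀ i, N₁ ≤ i → ∀ v : C₁.X i, v = 0)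
    (N₂ : ℕ) (hbd₂ : ∀ i, N₂ ≤ i → ∀ v : C₂.X i, v = 0)
    (hdim : ∀ i, Module.finrank ℝ (C₁.X i) = Module.finrank ℝ (C₂.X i))
    (F : ChainMap C₁ C₂) (hF : IsHomotopyEquiv F) :
    ∃ F' : ChainMap C₁ C₂, (∀ i, Function.Bijective (F'.f i)) ∧ Homotopic F F' :=
  exists_chain_iso_homotopic_of_homotopy_equiv_general C₁ C₂ hdim F hF
end

section
/- Let C be a bounded cochain complex of finite-dimensional real vector spaces indexed by the natural numbers, vanishing in degrees ≥ N, and let f : C → C be a chain map such that each f^i is a linear automorphism of C^i and f is chain homotopic to the identity chain map of C. Then the product of the determinants of f^i over even i < N equals the product of the determinants of f^i over odd i < N; equivalently, the alternating product ∏_{i<N} det(f^i)^{(-1)^i} equals 1. -/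
/-!
Write the homotopy as maps `Φ i : C^{i+1} → C^i`. Since `d ∘ d = 0`, the map
`f^{i+1} = 1 - d ∘ Φ i - Φ (i + 1) ∘ d` factors as `(1 - Φ (i + 1) ∘ d) ∘ (1 - d ∘ Φ i)`. With
`b (i + 1) = det (1 - d ∘ Φ i)` on `C^{i+1}`, the identity `det (1 - AB) = det (1 - BA)` gives
`det f^i = b i * b (i + 1)`. In the alternating product everything cancels except `b 0 = 1` and
`b N`, and `b N` is the determinant of an endomorphism of `C^N = 0`.
-/

open Finset

section Products

variable {M : Type*}

theorem prod_range_filter_succ [CommMonoid M] {b : ℕ → M} {N : ℕ} (h_zero : b 0 = 1)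
    (h_last : b N = 1) (p : ℕ → Prop) [DecidablePred p] :
    ∏ i ∈ range N with p (i + 1), b (i + 1) = ∏ i ∈ range N with p i, b i := by
  have h_total := (prod_range_succ' (fun i => if p i then b i else 1) N).symm.trans
    (prod_range_succ (fun i => if p i then b i else 1) N)
  simpa only [h_zero, h_last, ite_self, mul_one, ← prod_filter] using h_total

theorem prod_even_mul_succ_eq_prod_not_even [CommMonoid M] {b : ℕ → M} {N : ℕ}
    (h_zero : b 0 = 1) (h_last : b N = 1) :
    ∏ i ∈ range N with Even i, b i * b (i + 1) =
      ∏ i ∈ range N with ¬ Even i, b i * b (i + 1) := by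
  have h_even : ∏ i ∈ range N with Even i, b (i + 1) = ∏ i ∈ range N with ¬ Even i, b i := by
    simpa only [Nat.even_add_one, not_not] using
      prod_range_filter_succ h_zero h_last (fun i => ¬ Even i)
  have h_odd : ∏ i ∈ range N with ¬ Even i, b (i + 1) = ∏ i ∈ range N with Even i, b i := by
    simpa only [Nat.even_add_one] using prod_range_filter_succ h_zero h_last Even
  rw [prod_mul_distrib, prod_mul_distrib, h_even, h_odd, mul_comm]

theorem prod_zpow_neg_one_pow_eq_div [DivisionCommMonoid M] (s : Finset ℕ) (g : ℕ → M) :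
    ∏ i ∈ s, g i ^ ((-1 : ℤ) ^ i) =
      (∏ i ∈ s with Even i, g i) / ∏ i ∈ s with ¬ Even i, g i := by
  rw [← prod_filter_mul_prod_filter_not s Even, div_eq_mul_inv, ← prod_inv_distrib]
  congr 1 <;> refine prod_congr rfl fun i hi => ?_
  · rw [(mem_filter.mp hi).2.neg_one_pow, zpow_one]
  · rw [(Nat.not_even_iff_odd.mp (mem_filter.mp hi).2).neg_one_pow, zpow_neg_one]

end Products

theorem det_id_sub_comp_comm {R V W : Type*} [CommRing R]
    [AddCommGroup V] [Module R V] [Module.Free R V] [Module.Finite R V]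
    [AddCommGroup W] [Module R W] [Module.Free R W] [Module.Finite R W]
    (A : V →ₗ[R] W) (B : W →ₗ[R] V) :
    LinearMap.det (LinearMap.id - B ∘ₗ A) = LinearMap.det (LinearMap.id - A ∘ₗ B) := by
  classical
  let bV := Module.Free.chooseBasis R V
  let bW := Module.Free.chooseBasis R W
  rw [← LinearMap.det_toMatrix bV, ← LinearMap.det_toMatrix bW, map_sub, map_sub,
    LinearMap.toMatrix_comp bV bW bV, LinearMap.toMatrix_comp bW bV bW,
    LinearMap.toMatrix_id, LinearMap.toMatrix_id, Matrix.det_one_sub_mul_comm]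

theorem id_sub_comp_add_comp_eq_comp {R U V W : Type*} [Ring R]
    [AddCommGroup U] [Module R U] [AddCommGroup V] [Module R V] [AddCommGroup W] [Module R W]
    {d : U →ₗ[R] V} {d' : V →ₗ[R] W} (h : d' ∘ₗ d = 0) (Φ : V →ₗ[R] U) (Φ' : W →ₗ[R] V) :
    LinearMap.id - (d ∘ₗ Φ + Φ' ∘ₗ d') =
      (LinearMap.id - Φ' ∘ₗ d') ∘ₗ (LinearMap.id - d ∘ₗ Φ) := by
  have h_cross : (Φ' ∘ₗ d') ∘ₗ (d ∘ₗ Φ) = 0 := by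
    rw [LinearMap.comp_assoc, ← LinearMap.comp_assoc Φ d d', h, LinearMap.zero_comp,
      LinearMap.comp_zero]
  rw [LinearMap.comp_sub, LinearMap.comp_id, LinearMap.sub_comp, h_cross, LinearMap.id_comp,
    sub_zero, sub_sub, add_comm]

section Homotopy

variable {R : Type*} [CommRing R] {X : ℕ → Type*} [∀ i, AddCommGroup (X i)]
  [∀ i, Module R (X i)] (d : ∀ i, X i →ₗ[R] X (i + 1)) (Φ : ∀ i, X (i + 1) →ₗ[R] X i)

/-- The determinant of `1 - d ∘ Φ` on `X i`, where `d` is the differential arriving in degree `i`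
and `Φ` a homotopy. It is the factor shared by the determinants in degrees `i - 1` and `i` of a map
homotopic to the identity. Nothing arrives in degree `0`, so its value there is `1`. -/
noncomputable def homotopyDet : ℕ → R
  | 0 => 1
  | i + 1 => LinearMap.det (LinearMap.id - d i ∘ₗ Φ i)

theorem homotopyDet_eq_one_of_subsingleton (i : ℕ) [Subsingleton (X i)] :
    homotopyDet d Φ i = 1 := by
  cases i with
  | zero => rfl
  | succ i => exact LinearMap.det_eq_one_of_subsingleton _

variable [∀ i, Module.Free R (X i)] [∀ i, Module.Finite R (X i)] {d Φ}

theorem det_eq_homotopyDet_mul_homotopyDet_succ (h_complex : ∀ i, d (i + 1) ∘ₗ d i = 0)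
    {f : ∀ i, X i →ₗ[R] X i} (h_zero : LinearMap.id - f 0 = Φ 0 ∘ₗ d 0)
    (h_succ : ∀ i, LinearMap.id - f (i + 1) = d i ∘ₗ Φ i + Φ (i + 1) ∘ₗ d (i + 1)) (i : ℕ) :
    LinearMap.det (f i) = homotopyDet d Φ i * homotopyDet d Φ (i + 1) := by
  cases i with
  | zero =>
    rw [← sub_sub_cancel LinearMap.id (f 0), h_zero, det_id_sub_comp_comm, homotopyDet,
      homotopyDet, one_mul]
  | succ i =>
    rw [← sub_sub_cancel LinearMap.id (f (i + 1)), h_succ,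
      id_sub_comp_add_comp_eq_comp (h_complex i), LinearMap.det_comp, det_id_sub_comp_comm,
      homotopyDet, homotopyDet, mul_comm]

theorem prod_even_det_eq_prod_not_even_det
    (h_complex : ∀ i, d (i + 1) ∘ₗ d i = 0) (N : ℕ) [Subsingleton (X N)]
    {f : ∀ i, X i →ₗ[R] X i} (h_zero : LinearMap.id - f 0 = Φ 0 ∘ₗ d 0)
    (h_succ : ∀ i, LinearMap.id - f (i + 1) = d i ∘ₗ Φ i + Φ (i + 1) ∘ₗ d (i + 1)) :
    ∏ i ∈ range N with Even i, LinearMap.det (f i) =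
      ∏ i ∈ range N with ¬ Even i, LinearMap.det (f i) := by
  simp only [det_eq_homotopyDet_mul_homotopyDet_succ h_complex h_zero h_succ]
  exact prod_even_mul_succ_eq_prod_not_even rfl (homotopyDet_eq_one_of_subsingleton d Φ N)

end Homotopy

theorem alternating_det_eq_one_of_homotopic_to_id_general {K : Type*} [Field K] {X : ℕ → Type*}
    [∀ i, AddCommGroup (X i)] [∀ i, Module K (X i)] [∀ i, FiniteDimensional K (X i)]
    {d : ∀ i, X i →ₗ[K] X (i + 1)} (h_complex : ∀ i, d (i + 1) ∘ₗ d i = 0)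
    (N : ℕ) [Subsingleton (X N)] {f : ∀ i, X i →ₗ[K] X i} {Φ : ∀ i, X (i + 1) →ₗ[K] X i}
    (h_zero : LinearMap.id - f 0 = Φ 0 ∘ₗ d 0)
    (h_succ : ∀ i, LinearMap.id - f (i + 1) = d i ∘ₗ Φ i + Φ (i + 1) ∘ₗ d (i + 1)) :
    (∏ i ∈ range N with Even i, LinearMap.det (f i) =
      ∏ i ∈ range N with ¬ Even i, LinearMap.det (f i)) ∧
    ((∀ i < N, Function.Bijective (f i)) →
      ∏ i ∈ range N, LinearMap.det (f i) ^ ((-1 : ℤ) ^ i) = 1) := by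
  have h_parity := prod_even_det_eq_prod_not_even_det h_complex N h_zero h_succ
  refine ⟨h_parity, fun h_bij => ?_⟩
  have h_odd_ne_zero : ∏ i ∈ range N with ¬ Even i, LinearMap.det (f i) ≠ 0 :=
    prod_ne_zero_iff.mpr fun i hi =>
      have h_unit : IsUnit (f i) :=
        (Module.End.isUnit_iff _).mpr (h_bij i (mem_range.mp (mem_filter.mp hi).1))
      (LinearMap.isUnit_det _ h_unit).ne_zero
  rw [prod_zpow_neg_one_pow_eq_div, h_parity, div_self h_odd_ne_zero]

/-- If `C` is a bounded cochain complex of finite-dimensional real vector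
spaces vanishing in degrees `≥ N`, and `F : C → C` is a chain automorphism that is chain
homotopic to the identity, then the product of `det (F^i)` over even `i < N` equals the
product over odd `i < N`; equivalently, the alternating product
`∏_{i<N} det(F^i)^{(-1)^i}` equals `1`. -/
theorem alternating_det_eq_one_of_homotopic_to_id
    (C : CochainComplexNat) [∀ i, FiniteDimensional ℝ (C.X i)]
    (N : ℕ) (hbd : ∀ i, N ≤ i → ∀ v : C.X i, v = 0)
    (F : ChainMap C C) (hbij : ∀ i, Function.Bijective (F.f i))
    (hhom : Homotopic F (ChainMap.id C)) :
    (∏ i ∈ (Finset.range N).filter (fun i => Even i), LinearMap.det (F.f i)) =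
      (∏ i ∈ (Finset.range N).filter (fun i => ¬ Even i), LinearMap.det (F.f i)) ∧
    ∏ i ∈ Finset.range N, LinearMap.det (F.f i) ^ ((-1 : ℤ) ^ i) = 1 := by
  obtain ⟨Φ, h_zero, h_succ⟩ := hhom
  have : Subsingleton (C.X N) := subsingleton_of_forall_eq 0 (hbd N le_rfl)
  exact (alternating_det_eq_one_of_homotopic_to_id_general C.d_comp_d N h_zero h_succ).imp_right
    fun h => h fun i _ => hbij i
end
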